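/- Fix w > 0 and z > 0, and set q = q(N) with q(N)/(w√N) → z as N → ∞ (e.g. q = wz√N). Then the complete-graph potential U_q^(N) = ∑_{h=1}^{N-1} (q/(q+Nw)) (Nw/(q+Nw))^{h-1} ∏_{k=2}^h (1-k/N) converges as N → ∞ to √(2π)·z·exp(z²/2)·P(Z > z), where Z is a standard Gaussian. -/

import Mathlib

open Filter Real

lemma aux_lower (t : ℝ) (ht : t < 1) : exp (-(t / (1 - t))) ≤ 1 - t := by
  have h1 : 0 < 1 - t := by linarith
  rw [Real.exp_neg]
  apply inv_le_of_inv_le₀ h1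
  have : (1 - t)⁻¹ = t / (1 - t) + 1 := by field_simp; ring
  rw [this]
  exact add_one_le_exp _

lemma aux_upper (t : ℝ) : 1 - t ≤ exp (-t) := by
  have := add_one_le_exp (-t); linarith

lemma aux_sum (n : ℕ) : ∑ k ∈ Finset.Icc 2 (n+1), (k : ℝ) = n * (n + 3) / 2 := by
  induction n with
  | zero => simp
  | succ n ih =>
    rw [Finset.sum_Icc_succ_top (by omega), ih]; push_cast; ring

noncomputable def auxProd (N n : ℕ) : ℝ := ∏ k ∈ Finset.Icc 2 (n+1), (1 - (k : ℝ) / (N : ℝ))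

lemma auxProd_zero (N n : ℕ) (hN : 2 ≤ N) (h : N - 1 ≤ n) : auxProd N n = 0 := by
  apply Finset.prod_eq_zero (i := N)
  · simp; omega
  · have : (N : ℝ) ≠ 0 := by positivity
    field_simp; simp

lemma auxProd_nonneg (N n : ℕ) (hN : 2 ≤ N) : 0 ≤ auxProd N n := by
  rcases le_or_gt (N - 1) n with h | h
  · rw [auxProd_zero N n hN h]
  · apply Finset.prod_nonneg
    intro k hk
    rw [Finset.mem_Icc] at hk
    have : (k : ℝ) ≤ N := by exact_mod_cast (by omega : k ≤ N)
    have : (k : ℝ) / N ≤ 1 := div_le_one_of_le₀ this (by positivity)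
    linarith

lemma auxProd_upper' (N n : ℕ) (hN : 2 ≤ N) (h : n < N - 1) :
    auxProd N n ≤ exp (-(n * (n + 3) / 2 / N : ℝ)) := by
  rw [← aux_sum, Finset.sum_div, ← Finset.sum_neg_distrib, Real.exp_sum]
  apply Finset.prod_le_prod
  · intro k hk
    rw [Finset.mem_Icc] at hk
    have : (k : ℝ) ≤ N := by exact_mod_cast (by omega : k ≤ N)
    have : (k : ℝ) / N ≤ 1 := div_le_one_of_le₀ this (by positivity)
    linarith
  · intro k hk
    exact aux_upper _

lemma auxProd_upper (N n : ℕ) (hN : 2 ≤ N) :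
    auxProd N n ≤ exp (-(n * (n + 3) / 2 / N : ℝ)) := by
  rcases le_or_gt (N - 1) n with h | h
  · rw [auxProd_zero N n hN h]; positivity
  · exact auxProd_upper' N n hN h

lemma auxProd_le_one (N n : ℕ) (hN : 2 ≤ N) : auxProd N n ≤ 1 := by
  refine (auxProd_upper N n hN).trans ?_
  rw [Real.exp_le_one_iff]
  have : (0:ℝ) ≤ n * (n + 3) / 2 / N := by positivity
  linarith

lemma auxProd_lower (N n : ℕ) (h : n + 1 < N) :
    exp (-((n * (n + 3) / 2 / N) / (1 - (n+1) / N) : ℝ)) ≤ auxProd N n := by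
  rw [← aux_sum, Finset.sum_div, Finset.sum_div, ← Finset.sum_neg_distrib, Real.exp_sum]
  apply Finset.prod_le_prod
  · intro k hk; positivity
  · intro k hk
    rw [Finset.mem_Icc] at hk
    have hN : (0:ℝ) < N := by exact_mod_cast (by omega : 0 < N)
    have h1 : (k : ℝ) ≤ n + 1 := by exact_mod_cast hk.2
    have h2 : (n : ℝ) + 1 < N := by exact_mod_cast h
    have h3 : (k : ℝ) / N ≤ (n + 1) / N := by gcongr
    have h4 : ((n : ℝ) + 1) / N < 1 := (div_lt_one hN).2 h2
    refine le_trans ?_ (aux_lower (k / N) (by linarith))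
    rw [Real.exp_le_exp, neg_le_neg_iff]
    apply div_le_div_of_nonneg_left (by positivity) (by linarith) (by linarith)

lemma aux_step_interval (f : ℕ → ℝ) (M : ℕ) :
    (∫ y in (0:ℝ)..M, f ⌊y⌋₊) = ∑ n ∈ Finset.range M, f n := by
  have key : ∀ n : ℕ, ∀ᵐ y : ℝ, y ∈ Set.uIoc (n:ℝ) ((n+1:ℕ):ℝ) → f n = f ⌊y⌋₊ := by
    intro n
    have : ∀ᵐ y : ℝ, y ≠ ((n+1:ℕ):ℝ) := by
      simp [MeasureTheory.ae_iff]
    filter_upwards [this] with y hy hmem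
    rw [Set.uIoc_of_le (by simp)] at hmem
    have : ⌊y⌋₊ = n := by
      rw [Nat.floor_eq_iff (le_trans (by positivity) hmem.1.le)]
      refine ⟨hmem.1.le, ?_⟩
      have := lt_of_le_of_ne hmem.2 hy
      simpa using this
    rw [this]
  have hint : ∀ n : ℕ, IntervalIntegrable (fun y : ℝ => f ⌊y⌋₊) MeasureTheory.volume
      ((n:ℕ):ℝ) ((n+1:ℕ):ℝ) := by
    intro n
    have h0 : IntervalIntegrable (fun y : ℝ => f n) MeasureTheory.volume ((n:ℕ):ℝ) ((n+1:ℕ):ℝ) := by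
      simp
    apply h0.congr_ae
    rw [Filter.EventuallyEq, MeasureTheory.ae_restrict_iff' measurableSet_uIoc]
    exact key n
  have := intervalIntegral.sum_integral_adjacent_intervals (f := fun y : ℝ => f ⌊y⌋₊)
    (μ := MeasureTheory.volume) (a := fun n : ℕ => (n:ℝ)) (n := M) (fun k _ => hint k)
  simp only [Nat.cast_zero] at this
  rw [← this]
  apply Finset.sum_congr rfl
  intro n _
  rw [← intervalIntegral.integral_congr_ae (key n)]
  simp

lemma aux_step (f : ℕ → ℝ) (M : ℕ) (hf : ∀ n, M ≤ n → f n = 0) (s : ℝ) (hs : 0 < s) :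
    (∫ x in Set.Ioi (0:ℝ), s * f ⌊s * x⌋₊) = ∑ n ∈ Finset.range M, f n := by
  rw [MeasureTheory.integral_const_mul,
    MeasureTheory.integral_comp_mul_left_Ioi (fun y => f ⌊y⌋₊) 0 hs]
  rw [← aux_step_interval, intervalIntegral.integral_of_le (by positivity), mul_zero, smul_eq_mul,
    mul_inv_cancel_left₀ hs.ne']
  apply MeasureTheory.setIntegral_eq_of_subset_of_forall_sdiff_eq_zero measurableSet_Ioi
  · exact Set.Ioc_subset_Ioi_self
  · intro y hy
    apply hf
    have : (M:ℝ) < y := by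
      by_contra hc
      exact hy.2 ⟨hy.1, not_lt.1 hc⟩
    exact Nat.le_floor this.le

lemma aux_final (z : ℝ) : (∫ x in Set.Ioi (0:ℝ), z * (exp (-(x * z)) * exp (-(x^2/2)))) =
    Real.sqrt (2 * Real.pi) * z * Real.exp (z ^ 2 / 2) *
        ∫ t in Set.Ioi z, (1 / Real.sqrt (2 * Real.pi)) * Real.exp (-t ^ 2 / 2) := by
  have h : (∫ t in Set.Ioi z, Real.exp (-t ^ 2 / 2)) =
      ∫ x in Set.Ioi (0:ℝ), Real.exp (-(x + z) ^ 2 / 2) := by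
    have := (MeasureTheory.measurePreserving_add_right MeasureTheory.volume z).setIntegral_preimage_emb
      (MeasurableEquiv.addRight z).measurableEmbedding (fun t => Real.exp (-t ^ 2 / 2)) (Set.Ioi z)
    rw [← this]
    simp
  rw [MeasureTheory.integral_const_mul, MeasureTheory.integral_const_mul, h]
  have h2 : ∀ x : ℝ, exp (-(x * z)) * exp (-(x^2/2)) = exp (z^2/2) * Real.exp (-(x + z) ^ 2 / 2) := by
    intro x; rw [← Real.exp_add, ← Real.exp_add]; congr 1; ring
  simp_rw [h2]
  rw [MeasureTheory.integral_const_mul]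
  have : √(2 * π) ≠ 0 := by positivity
  field_simp

/-- `⌊√N x⌋ / √N → x`. -/
lemma aux_floor (x : ℝ) (hx : 0 ≤ x) :
    Tendsto (fun N : ℕ => (⌊√(N:ℝ) * x⌋₊ : ℝ) / √(N:ℝ)) atTop (nhds x) := by
  have h := (tendsto_nat_floor_mul_div_atTop hx).comp
    (Real.tendsto_sqrt_atTop.comp (tendsto_natCast_atTop_atTop (R := ℝ)))
  refine h.congr (fun N => ?_)
  simp [mul_comm]

lemma aux_inv_sqrt : Tendsto (fun N : ℕ => (√(N:ℝ))⁻¹) atTop (nhds 0) :=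
  (Real.tendsto_sqrt_atTop.comp (tendsto_natCast_atTop_atTop (R := ℝ))).inv_tendsto_atTop

lemma aux_prod_lim (x : ℝ) (hx : 0 ≤ x) :
    Tendsto (fun N : ℕ => auxProd N ⌊√(N:ℝ) * x⌋₊) atTop (nhds (exp (-(x^2/2)))) := by
  have hf := aux_floor x hx
  have hi := aux_inv_sqrt
  have hS : Tendsto (fun N : ℕ => ((⌊√(N:ℝ) * x⌋₊ : ℝ) * (⌊√(N:ℝ) * x⌋₊ + 3) / 2 / N)) atTop
      (nhds (x^2/2)) := by
    have := ((hf.mul (hf.add (hi.const_mul 3))).div_const 2)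
    have e : x * (x + 3 * 0) / 2 = x^2/2 := by ring
    rw [e] at this
    refine this.congr' ?_
    filter_upwards [eventually_ge_atTop 1] with N hN
    have h0 : 0 < √(N:ℝ) := by positivity
    have h1 : (N:ℝ) = √(N:ℝ) * √(N:ℝ) := (Real.mul_self_sqrt (by positivity)).symm
    generalize (⌊√(N:ℝ) * x⌋₊ : ℝ) = n
    generalize √(N:ℝ) = s at *
    rw [h1]; field_simp
  have hT : Tendsto (fun N : ℕ => 1 - ((⌊√(N:ℝ) * x⌋₊ : ℝ) + 1) / N) atTop (nhds 1) := by
    have := ((hf.add hi).mul hi).const_sub 1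
    have e : 1 - (x + 0) * 0 = (1:ℝ) := by ring
    rw [e] at this
    refine this.congr' ?_
    filter_upwards [eventually_ge_atTop 1] with N hN
    have h0 : 0 < √(N:ℝ) := by positivity
    have h1 : (N:ℝ) = √(N:ℝ) * √(N:ℝ) := (Real.mul_self_sqrt (by positivity)).symm
    generalize (⌊√(N:ℝ) * x⌋₊ : ℝ) = n
    generalize √(N:ℝ) = s at *
    rw [h1]; field_simp
  have hlow := (Real.continuous_exp.tendsto _).comp (hS.div hT one_ne_zero).neg
  have hup := (Real.continuous_exp.tendsto _).comp hS.neg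
  rw [div_one] at hlow
  refine tendsto_of_tendsto_of_tendsto_of_le_of_le' hlow hup ?_ ?_
  · filter_upwards [eventually_ge_atTop 2, hT.eventually_const_lt (zero_lt_one)] with N hN hlt
    apply auxProd_lower
    have hN' : (0:ℝ) < N := by positivity
    have : ((⌊√(N:ℝ) * x⌋₊ : ℝ) + 1) / N < 1 := by linarith
    rw [div_lt_one hN'] at this
    exact_mod_cast this
  · filter_upwards [eventually_ge_atTop 2] with N hN
    exact auxProd_upper _ _ hN

lemma aux_pow_lim (p : ℕ → ℝ) (z : ℝ) (hp1 : ∀ N, p N < 1)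
    (hp : Tendsto (fun N : ℕ => √(N:ℝ) * p N) atTop (nhds z)) (x : ℝ) (hx : 0 ≤ x) :
    Tendsto (fun N : ℕ => (1 - p N) ^ ⌊√(N:ℝ) * x⌋₊) atTop (nhds (exp (-(x * z)))) := by
  have hf := aux_floor x hx
  have hi := aux_inv_sqrt
  have hS : Tendsto (fun N : ℕ => (⌊√(N:ℝ) * x⌋₊ : ℝ) * p N) atTop (nhds (x * z)) := by
    refine (hf.mul hp).congr' ?_
    filter_upwards [eventually_ge_atTop 1] with N hN
    have h0 : 0 < √(N:ℝ) := by positivity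
    field_simp
  have hT : Tendsto (fun N : ℕ => 1 - p N) atTop (nhds 1) := by
    have := (hi.mul hp).const_sub 1
    rw [zero_mul, sub_zero] at this
    refine this.congr' ?_
    filter_upwards [eventually_ge_atTop 1] with N hN
    have h0 : 0 < √(N:ℝ) := by positivity
    field_simp
  have hlow := (Real.continuous_exp.tendsto _).comp (hS.div hT one_ne_zero).neg
  have hup := (Real.continuous_exp.tendsto _).comp hS.neg
  rw [div_one] at hlow
  refine tendsto_of_tendsto_of_tendsto_of_le_of_le hlow hup ?_ ?_
  · intro N
    have := pow_le_pow_left₀ (exp_nonneg _) (aux_lower (p N) (hp1 N)) ⌊√(N:ℝ) * x⌋₊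
    rw [← Real.exp_nat_mul] at this
    refine le_trans (le_of_eq ?_) this
    simp only [Function.comp_apply, Pi.div_apply]
    congr 1; ring
  · intro N
    have := pow_le_pow_left₀ (by linarith [hp1 N]) (aux_upper (p N)) ⌊√(N:ℝ) * x⌋₊
    rw [← Real.exp_nat_mul] at this
    refine le_trans this (le_of_eq ?_)
    simp only [Function.comp_apply]
    congr 1; ring

/-- Scaling limit of the complete-graph potential at the critical scale `q ∼ wz√N`. -/
theorem stmt2 (w z : ℝ) (hw : 0 < w) (hz : 0 < z) (q : ℕ → ℝ) (hqpos : ∀ N, 0 < q N)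
    (hq : Tendsto (fun N : ℕ => q N / (w * Real.sqrt N)) atTop (nhds z)) :
    Tendsto (fun N : ℕ =>
        ∑ h ∈ Finset.Icc 1 (N - 1),
          q N / (q N + (N : ℝ) * w) * ((N : ℝ) * w / (q N + (N : ℝ) * w)) ^ (h - 1) *
            ∏ k ∈ Finset.Icc 2 h, (1 - (k : ℝ) / (N : ℝ)))
      atTop
      (nhds (Real.sqrt (2 * Real.pi) * z * Real.exp (z ^ 2 / 2) *
        ∫ t in Set.Ioi z, (1 / Real.sqrt (2 * Real.pi)) * Real.exp (-t ^ 2 / 2))) := by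
  rw [← aux_final]
  -- the p N = 1 case at N = 0 is removed
  set p : ℕ → ℝ := fun N => if N = 0 then 1/2 else q N / (q N + (N : ℝ) * w) with hpdef
  have hpN : ∀ N, 1 ≤ N → p N = q N / (q N + (N : ℝ) * w) := by
    intro N hN; exact if_neg (by omega)
  have hp01 : ∀ N, 0 < p N ∧ p N < 1 := by
    intro N
    rcases Nat.eq_zero_or_pos N with h | h
    · simp [hpdef, h]; norm_num
    · rw [hpN N h]
      have := hqpos N
      have h2 : 0 < (N:ℝ) * w := by positivity
      exact ⟨by positivity, (div_lt_one (by positivity)).2 (by linarith)⟩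
  have hp : Tendsto (fun N : ℕ => √(N:ℝ) * p N) atTop (nhds z) := by
    have h1 : Tendsto (fun N : ℕ => q N / (w * √(N:ℝ)) * (√(N:ℝ))⁻¹ + 1) atTop (nhds 1) := by
      simpa using (hq.mul aux_inv_sqrt).add_const 1
    have := hq.div h1 one_ne_zero
    rw [div_one] at this
    refine this.congr' ?_
    filter_upwards [eventually_ge_atTop 1] with N hN
    rw [hpN N hN]
    have h0 : 0 < √(N:ℝ) := by positivity
    have h1 : (N:ℝ) = √(N:ℝ) * √(N:ℝ) := (Real.mul_self_sqrt (by positivity)).symm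
    have := hqpos N
    simp only [Pi.div_apply]
    generalize √(N:ℝ) = s at *
    rw [h1]
    field_simp
  have hsum : ∀ᶠ N : ℕ in atTop,
      (∫ x in Set.Ioi (0:ℝ), √(N:ℝ) * (p N * (1 - p N) ^ ⌊√(N:ℝ) * x⌋₊ *
        auxProd N ⌊√(N:ℝ) * x⌋₊)) =
      ∑ h ∈ Finset.Icc 1 (N - 1),
          q N / (q N + (N : ℝ) * w) * ((N : ℝ) * w / (q N + (N : ℝ) * w)) ^ (h - 1) *
            ∏ k ∈ Finset.Icc 2 h, (1 - (k : ℝ) / (N : ℝ)) := by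
    filter_upwards [eventually_ge_atTop 2] with N hN
    have hs : 0 < √(N:ℝ) := by positivity
    rw [aux_step (fun n => p N * (1 - p N) ^ n * auxProd N n) (N - 1)
      (fun n hn => by simp [auxProd_zero N n hN hn]) _ hs]
    have e : Finset.Icc 1 (N-1) = Finset.Ico 1 N := by
      ext k; simp; omega
    rw [e, Finset.sum_Ico_eq_sum_range]
    apply Finset.sum_congr rfl
    intro n _
    have hr : 1 - p N = (N : ℝ) * w / (q N + (N : ℝ) * w) := by
      rw [hpN N (by omega)]
      have := hqpos N
      have h2 : 0 ≤ (N:ℝ) * w := by positivity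
      have h3 : q N + N * w ≠ 0 := by positivity
      field_simp; ring
    rw [hr, hpN N (by omega), auxProd, add_comm 1 n]
    simp
  refine Tendsto.congr' hsum ?_
  apply MeasureTheory.tendsto_integral_filter_of_dominated_convergence
    (fun x => 2 * z * (exp 1 * exp (-(z/2) * x)))
  · refine Eventually.of_forall (fun N => Measurable.aestronglyMeasurable ?_)
    have hfl : Measurable (fun x : ℝ => ⌊√(N:ℝ) * x⌋₊) :=
      Nat.measurable_floor.comp (measurable_const_mul _)
    exact (measurable_from_nat (f := fun n => √(N:ℝ) * (p N * (1 - p N) ^ n * auxProd N n))).comp hfl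
  · filter_upwards [eventually_ge_atTop 2, hp.eventually_lt_const (by linarith : z < 2 * z),
      hp.eventually_const_lt (by linarith : z / 2 < z)] with N hN h2 h1
    rw [MeasureTheory.ae_restrict_iff' measurableSet_Ioi]
    refine Eventually.of_forall (fun x hx => ?_)
    have hx : 0 < x := hx
    obtain ⟨hp0, hp1⟩ := hp01 N
    have hs : 0 < √(N:ℝ) := by positivity
    have hP0 := auxProd_nonneg N ⌊√(N:ℝ) * x⌋₊ hN
    have hP1 := auxProd_le_one N ⌊√(N:ℝ) * x⌋₊ hN
    have hr0 : 0 < 1 - p N := by linarith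
    have hpow : (1 - p N) ^ ⌊√(N:ℝ) * x⌋₊ ≤ exp 1 * exp (-(z/2) * x) := by
      have := pow_le_pow_left₀ hr0.le (aux_upper (p N)) ⌊√(N:ℝ) * x⌋₊
      rw [← Real.exp_nat_mul] at this
      refine this.trans ?_
      rw [← Real.exp_add, Real.exp_le_exp]
      have hfl := Nat.lt_floor_add_one (√(N:ℝ) * x)
      generalize (⌊√(N:ℝ) * x⌋₊ : ℝ) = n at *
      have a1 : √(N:ℝ) * x * p N ≤ (n + 1) * p N := by gcongr
      have a2 : z / 2 * x ≤ √(N:ℝ) * p N * x := by gcongr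
      nlinarith
    have hpw0 : 0 < (1 - p N) ^ ⌊√(N:ℝ) * x⌋₊ := by positivity
    rw [Real.norm_of_nonneg (by positivity)]
    calc _ = (√(N:ℝ) * p N) * ((1 - p N) ^ ⌊√(N:ℝ) * x⌋₊ * auxProd N ⌊√(N:ℝ) * x⌋₊) := by ring
      _ ≤ (2 * z) * ((exp 1 * exp (-(z/2) * x)) * 1) := by gcongr
      _ = _ := by ring
  · exact ((exp_neg_integrableOn_Ioi 0 (by linarith : 0 < z/2)).const_mul _).const_mul _
  · rw [MeasureTheory.ae_restrict_iff' measurableSet_Ioi]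
    refine Eventually.of_forall (fun x hx => ?_)
    have hx : 0 ≤ x := le_of_lt hx
    have := hp.mul ((aux_pow_lim p z (fun N => (hp01 N).2) hp x hx).mul (aux_prod_lim x hx))
    refine this.congr (fun N => ?_)
    ring
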